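/- Let H be a complex Hilbert space, G a selfadjoint unitary on H with infinite-dimensional eigenspace H_odd for the eigenvalue −1, γ_G the Bogoliubov automorphism of CAR(H) with γ_G(a(φ)) = a(Gφ), and μ₀ the unique tracial state on CAR(H). Then the only γ_G-twisted tracial functional τ on CAR(H) (i.e. τ(xy) = τ(y γ_G(x)) for all x, y) that is dominated by μ₀ (i.e. |τ(a*b)|² ≤ μ₀(a*a)μ₀(b*b) for all a, b) is τ = 0. Consequently the trace μ₀ has a unique tracial extension to the crossed product CAR(H) ⋊_{γ_G} ℤ₂, namely μ₀ ∘ E with E the canonical conditional expectation. -/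

import Mathlib

open scoped InnerProductSpace ComplexOrder

noncomputable section

/-- A strongly continuous one-parameter group of *-automorphisms of a unital C*-algebra. -/
structure Dynamics (A : Type*) [CStarAlgebra A] where
  α : ℝ → A ≃⋆ₐ[ℂ] A
  α_zero : ∀ a, α 0 a = a
  α_add : ∀ s t a, α (s + t) a = α s (α t a)
  α_cont : ∀ a, Continuous fun t => α t a

variable {A : Type*} [CStarAlgebra A]

/-- `f` is the entire analytic extension of `t ↦ α_t a`; an element admitting such an
extension is an entire analytic element for the dynamics. -/
def Dynamics.IsAnalyticExt (d : Dynamics A) (a : A) (f : ℂ → A) : Prop :=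
  Differentiable ℂ f ∧ ∀ t : ℝ, f (t : ℂ) = d.α t a

/-- A state: positive normalized linear functional. -/
def IsState (ω : A → ℂ) : Prop :=
  IsLinearMap ℂ ω ∧ (∀ a : A, 0 ≤ ω (star a * a)) ∧ ω 1 = 1

/-- The `(α, β)`-KMS condition: `ω (a * α_{iβ}(b)) = ω (b * a)` for entire analytic `a, b`. -/
def Dynamics.IsKMS (d : Dynamics A) (β : ℝ) (ω : A → ℂ) : Prop :=
  IsState ω ∧ ∀ a b : A, ∀ fa fb : ℂ → A, d.IsAnalyticExt a fa → d.IsAnalyticExt b fb →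
    ω (a * fb (Complex.I * β)) = ω (b * a)

/-- A graded C*-dynamical system: dynamics plus a commuting involutive grading. -/
structure GradedDyn (A : Type*) [CStarAlgebra A] extends Dynamics A where
  γ : A ≃⋆ₐ[ℂ] A
  γ_invol : ∀ a, γ (γ a) = a
  γ_comm : ∀ t a, γ (α t a) = α t (γ a)

/-- The `γ`-twisted `(α, β)`-KMS condition: `ρ (a * α_{iβ}(b)) = ρ (b * γ a)`. -/
def Dynamics.IsTwistedKMS (d : Dynamics A) (γ : A ≃⋆ₐ[ℂ] A) (β : ℝ) (ρ : A → ℂ) : Prop :=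
  IsLinearMap ℂ ρ ∧ ∀ a b : A, ∀ fa fb : ℂ → A, d.IsAnalyticExt a fa → d.IsAnalyticExt b fb →
    ρ (a * fb (Complex.I * β)) = ρ (b * γ a)

/-- Hermitian functional: `ρ(a*) = conj (ρ a)`. -/
def IsHermitian (ρ : A → ℂ) : Prop := ∀ a, ρ (star a) = starRingEnd ℂ (ρ a)

/-- `ρ` is dominated by `ω`: `|ρ(a* b)|² ≤ ω(a* a) ω(b* b)`. -/
def Dominated (ω ρ : A → ℂ) : Prop :=
  ∀ a b : A, (‖ρ (star a * b)‖ : ℂ) ^ 2 ≤ ω (star a * a) * ω (star b * b)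

/-- The set `F_β(A, α, γ, ω)`: hermitian `γ`-twisted `(α,β)`-KMS functionals dominated by `ω`. -/
def TwistedKMSDom (d : Dynamics A) (γ : A ≃⋆ₐ[ℂ] A) (β : ℝ) (ω ρ : A → ℂ) : Prop :=
  d.IsTwistedKMS γ β ρ ∧ IsHermitian ρ ∧ Dominated ω ρ

/-- Product of the `ℤ₂`-crossed product `A ⋊_γ ℤ₂` realized on `A ⊕ A`. -/
def cpMul (γ : A ≃⋆ₐ[ℂ] A) (p q : A × A) : A × A :=
  (p.1 * q.1 + p.2 * γ q.2, p.1 * q.2 + p.2 * γ q.1)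

/-- Involution of the crossed product. -/
def cpStar (γ : A ≃⋆ₐ[ℂ] A) (p : A × A) : A × A := (star p.1, γ (star p.2))

/-- Unit of the crossed product. -/
def cpOne : A × A := (1, 0)

/-- A state on the crossed product. -/
def cpIsState (γ : A ≃⋆ₐ[ℂ] A) (W : A × A → ℂ) : Prop :=
  IsLinearMap ℂ W ∧ (∀ p : A × A, 0 ≤ W (cpMul γ (cpStar γ p) p)) ∧ W (cpOne : A × A) = 1

/-- Entire analytic extension for the componentwise extended dynamics `𝛂` on `A ⊕ A`. -/
def cpIsAnalyticExt (d : Dynamics A) (p : A × A) (f : ℂ → A × A) : Prop :=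
  Differentiable ℂ f ∧ ∀ t : ℝ, f (t : ℂ) = (d.α t p.1, d.α t p.2)

/-- `(𝛂, β)`-KMS states of the crossed product `A ⋊_γ ℤ₂`. -/
def cpIsKMS (d : Dynamics A) (γ : A ≃⋆ₐ[ℂ] A) (β : ℝ) (W : A × A → ℂ) : Prop :=
  cpIsState γ W ∧ ∀ p q : A × A, ∀ fp fq : ℂ → A × A,
    cpIsAnalyticExt d p fp → cpIsAnalyticExt d q fq →
    W (cpMul γ p (fq (Complex.I * β))) = W (cpMul γ q p)


/-- A realization of the CAR algebra `CAR(H)` over a complex Hilbert space `H`: a unital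
C*-algebra `A` generated by elements `c φ = a(φ)` (antilinear in `φ`) satisfying the
canonical anticommutation relations. -/
structure CARrep (H A : Type*) [NormedAddCommGroup H] [InnerProductSpace ℂ H]
    [CStarAlgebra A] where
  c : H → A
  c_add : ∀ φ ψ, c (φ + ψ) = c φ + c ψ
  c_smul : ∀ (z : ℂ) (φ), c (z • φ) = starRingEnd ℂ z • c φ
  car₁ : ∀ φ ψ, star (c φ) * c ψ + c ψ * star (c φ) = ⟪ψ, φ⟫_ℂ • (1 : A)
  car₂ : ∀ φ ψ, c φ * c ψ + c ψ * c φ = 0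
  gen : Dense
    ((Algebra.adjoin ℂ (Set.range c ∪ Set.range fun φ => star (c φ)) : Subalgebra ℂ A) : Set A)

namespace CARrep

variable {H A : Type*} [NormedAddCommGroup H] [InnerProductSpace ℂ H] [CStarAlgebra A]

/-- The field operators `Φ(ξ) = a*(ξ) + a(ξ)`. -/
def Φ (r : CARrep H A) (ξ : H) : A := star (r.c ξ) + r.c ξ

/-- Product of field operators `Φ(ξ₁) ⋯ Φ(ξ_n)` along a list. -/
def fieldProd (r : CARrep H A) (L : List H) : A := (L.map r.Φ).prod

end CARrep

/-- The two-point function `Re⟪ξ, η⟫ + i Re⟪ξ, T η⟫` determined by an operator `T`. -/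
def twoPt {H : Type*} [NormedAddCommGroup H] [InnerProductSpace ℂ H]
    (T : H →L[ℂ] H) (ξ η : H) : ℂ :=
  ((⟪ξ, η⟫_ℂ).re : ℂ) + Complex.I * ((⟪ξ, T η⟫_ℂ).re : ℂ)

/-- The quasifree `n`-point values determined by the two-point function of `T`: the sum
over pairings with parity signs, computed via the equivalent Wick recursion
`μ(Φ_{ξ} Φ_{L₀} ⋯ ) = Σ_j (−1)^j μ(Φ_ξ Φ_{L_j}) μ(Φ_{L_0} ⋯ ĵ ⋯)`. -/
def qfVal {H : Type*} [NormedAddCommGroup H] [InnerProductSpace ℂ H]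
    (T : H →L[ℂ] H) : List H → ℂ
  | [] => 1
  | ξ :: L => ∑ j ∈ Finset.range L.length,
      (-1 : ℂ) ^ j * twoPt T ξ (L.getD j 0) * qfVal T (L.eraseIdx j)
  termination_by L => L.length
  decreasing_by
    simp only [List.length_cons]
    exact Nat.lt_succ_of_le (List.length_eraseIdx_le ..)

/-- `μ` is the quasifree functional with covariance operator `T` (on the *-algebra
generated by the fields): its values on products of fields are the quasifree values of
`T`; in particular `μ(1) = 1` and all odd-point functions vanish. -/
def CARrep.IsQuasifreeWith {H A : Type*} [NormedAddCommGroup H]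
    [InnerProductSpace ℂ H] [CStarAlgebra A] (r : CARrep H A) (T : H →L[ℂ] H)
    (μ : A → ℂ) : Prop :=
  ∀ L : List H, μ (r.fieldProd L) = qfVal T L


/-!
Products of creation and annihilation operators of vectors of a finite-dimensional subspace `K`
span a dense subspace, and are graded by their charge `q`, the number of creators minus the number
of annihilators. Let `x` be such a product and `τ` a continuous twisted trace.

If `q ≠ 0`, enlarge `K` to be `G`-invariant. Its number operator `n` is fixed by `γ` and satisfies
`[n, x] = q x`, so `q τ(x) = τ(n x) - τ(x n) = 0`.

If `q = 0`, then `x` is even. As `H_odd` is infinite-dimensional it contains a unit vector `ξ`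
orthogonal to `K`. The field `Φ(ξ)` commutes with `x`, squares to `1` and changes sign under `γ`,
so `τ(x) = τ(Φ(ξ) x Φ(ξ)) = -τ(x)`.

For a tracial state `W` of the crossed product, `b ↦ W(0, b)` is a twisted trace dominated by
the state `a ↦ W(a, 0)`, and in particular continuous; so it vanishes.
-/

section TwistedTrace

/-- The twisted trace property `τ (x * y) = τ (y * γ x)`, for maps on a set with multiplication
and an arbitrary twist `γ`. -/
def IsTwistedTrace {R M : Type*} [Mul R] (γ : R → R) (τ : R → M) : Prop :=
  ∀ x y, τ (x * y) = τ (y * γ x)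

namespace IsTwistedTrace

variable {R M F : Type*} [Ring R] [AddCommGroup M] [FunLike F R M] [AddMonoidHomClass F R M]
  {γ : R → R} {τ : F}

lemma apply_lie_eq_zero (hτ : IsTwistedTrace γ τ) {n : R} (hn : γ n = n) (x : R) :
    τ ⁅n, x⁆ = 0 := by
  rw [Ring.lie_def, map_sub, hτ n x, hn, sub_self]

lemma apply_eq_zero_of_commute [IsAddTorsionFree M] (hτ : IsTwistedTrace γ τ) {u x : R}
    (hu : u * u = 1) (hγu : γ u = -u) (hux : Commute u x) : τ x = 0 := by
  rw [← self_eq_neg]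
  calc τ x = τ (u * (x * u)) := by rw [← mul_assoc, hux.eq, mul_assoc, hu, mul_one]
    _ = τ (x * u * γ u) := hτ _ _
    _ = -τ x := by rw [hγu, mul_neg, mul_assoc, hu, mul_one, map_neg]

end IsTwistedTrace

end TwistedTrace

section InnerProductSpace

open Submodule in
lemma exists_norm_eq_one_mem_orthogonal {𝕜 E : Type*} [RCLike 𝕜] [NormedAddCommGroup E]
    [InnerProductSpace 𝕜 E] {V : Submodule 𝕜 E} (hV : ¬ FiniteDimensional 𝕜 V)
    (K : Submodule 𝕜 E) [FiniteDimensional 𝕜 K] : ∃ ξ ∈ V, ξ ∈ Kᗮ ∧ ‖ξ‖ = 1 := by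
  let P : V →ₗ[𝕜] K := K.orthogonalProjectionOnto.toLinearMap ∘ₗ V.subtype
  have hP : LinearMap.ker P ≠ ⊥ := fun h ↦
    hV (FiniteDimensional.of_injective P (LinearMap.ker_eq_bot.mp h))
  obtain ⟨ξ, hξP, hξ⟩ := exists_mem_ne_zero_of_ne_bot hP
  have hξK : (ξ : E) ∈ Kᗮ := orthogonalProjectionOnto_eq_zero_iff.mp hξP
  exact ⟨(‖(ξ : E)‖⁻¹ : 𝕜) • ξ, V.smul_mem _ ξ.2, Kᗮ.smul_mem _ hξK,
    norm_smul_inv_norm (by simpa using hξ)⟩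

variable {V : Type*} [AddCommGroup V] [Module ℂ V] {s : V →ₗ⋆[ℂ] V →ₗ[ℂ] ℂ}

lemma isSymm_of_forall_apply_self_nonneg (hs : ∀ v, 0 ≤ s v v) : s.IsSymm := by
  refine ⟨fun v w ↦ ?_⟩
  have im_eq_zero (u : V) : (s u u).im = 0 := (Complex.le_def.mp (hs u)).2.symm
  have h_add := im_eq_zero (v + w)
  have h_add_I := im_eq_zero (v + Complex.I • w)
  simp only [map_add, map_smul, map_smulₛₗ, LinearMap.add_apply, LinearMap.smul_apply,
    smul_eq_mul, Complex.conj_I, Complex.add_re, Complex.add_im, Complex.mul_re, Complex.mul_im,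
    Complex.neg_re, Complex.neg_im, Complex.I_re, Complex.I_im, im_eq_zero] at h_add h_add_I
  apply Complex.ext <;> simp only [Complex.conj_re, Complex.conj_im] <;> linarith

lemma norm_sq_apply_le_of_forall_apply_self_nonneg (hs : ∀ v, 0 ≤ s v v) (v w : V) :
    (‖s v w‖ : ℂ) ^ 2 ≤ s v v * s w w := by
  have hsymm := isSymm_of_forall_apply_self_nonneg hs
  let core : PreInnerProductSpace.Core ℂ V :=
    { inner := fun v w ↦ s v w
      conj_inner_symm := fun v w ↦ hsymm.eq w v
      re_inner_nonneg := fun v ↦ (Complex.le_def.mp (hs v)).1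
      add_left := fun u v w ↦ by simp
      smul_left := fun u v z ↦ by simp }
  have schwarz : ‖s v w‖ * ‖s w v‖ ≤ (s v v).re * (s w w).re :=
    InnerProductSpace.Core.inner_mul_inner_self_le (c := core) v w
  rw [← hsymm.eq v w, RCLike.norm_conj, ← sq] at schwarz
  rw [Complex.eq_re_of_ofReal_le (hs v), Complex.eq_re_of_ofReal_le (hs w)]
  exact_mod_cast schwarz

end InnerProductSpace

section States

variable {ω τ : A → ℂ}

lemma IsState.apply_star_mul_self_le (hω : IsState ω) (a : A) :
    ω (star a * a) ≤ ((‖a‖ ^ 2 : ℝ) : ℂ) := by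
  let : PartialOrder A := CStarAlgebra.spectralOrder A
  have : StarOrderedRing A := CStarAlgebra.spectralOrderedRing A
  obtain ⟨hlin, hpos, hone⟩ := hω
  obtain ⟨d, hd⟩ := CStarAlgebra.nonneg_iff_eq_star_mul_self.mp
    (sub_nonneg.mpr (CStarAlgebra.star_mul_le_algebraMap_norm_sq (a := a)))
  have hd_nonneg := hpos d
  rwa [← hd, Algebra.algebraMap_eq_smul_one, ← Complex.coe_smul, hlin.map_sub, hlin.map_smul,
    hone, smul_eq_mul, mul_one, sub_nonneg] at hd_nonneg

lemma Dominated.norm_apply_le (hτ : Dominated ω τ) (hω : IsState ω) (a : A) : ‖τ a‖ ≤ ‖a‖ := by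
  have h : (‖τ a‖ : ℂ) ^ 2 ≤ ((‖a‖ ^ 2 : ℝ) : ℂ) := by
    simpa [hω.2.2] using (hτ 1 a).trans
      (by simpa [hω.2.2] using hω.apply_star_mul_self_le a)
  exact (sq_le_sq₀ (norm_nonneg _) (norm_nonneg _)).mp (by exact_mod_cast h)

/-- A functional dominated by a state, bundled as a continuous linear map. -/
def Dominated.toContinuousLinearMap (hτ : Dominated ω τ) (hω : IsState ω)
    (hlin : IsLinearMap ℂ τ) : A →L[ℂ] ℂ :=
  (hlin.mk' τ).mkContinuous 1 fun a ↦ by simpa using hτ.norm_apply_le hω a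

end States

section CrossedProduct

variable {γ : A ≃⋆ₐ[ℂ] A} {W : A × A → ℂ}

variable (γ) in
/-- The sesquilinear form `(p, q) ↦ W (p* q)` of a linear functional on the crossed product. -/
def cpForm (hW : IsLinearMap ℂ W) : A × A →ₗ⋆[ℂ] A × A →ₗ[ℂ] ℂ :=
  LinearMap.mk₂'ₛₗ _ _ (fun p q ↦ W (cpMul γ (cpStar γ p) q))
    (fun p p' q ↦ by
      rw [← hW.map_add]; congr 1
      ext <;> simp only [cpMul, cpStar, Prod.fst_add, Prod.snd_add, star_add, map_add, add_mul] <;>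
        abel)
    (fun z p q ↦ by rw [← hW.map_smul]; congr 1; ext <;> simp [cpMul, cpStar])
    (fun p q q' ↦ by
      rw [← hW.map_add]; congr 1
      ext <;> simp only [cpMul, cpStar, Prod.fst_add, Prod.snd_add, map_add, mul_add] <;> abel)
    (fun z p q ↦ by rw [RingHom.id_apply, ← hW.map_smul]; congr 1; ext <;> simp [cpMul, cpStar])

lemma cpIsState.isState_inl (hW : cpIsState γ W) : IsState fun a ↦ W (a, 0) := by
  obtain ⟨hlin, hpos, hone⟩ := hW
  refine ⟨⟨fun a b ↦ ?_, fun z a ↦ ?_⟩, fun a ↦ ?_, hone⟩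
  · simp [← hlin.map_add]
  · simpa using hlin.map_smul z (a, 0)
  · simpa [cpMul, cpStar] using hpos (a, 0)

lemma isTwistedTrace_inr (htr : ∀ p q, W (cpMul γ p q) = W (cpMul γ q p)) :
    IsTwistedTrace γ fun a ↦ W (0, a) := fun x y ↦ by
  simpa [cpMul] using htr (x, 0) (0, y)

lemma apply_map_inl (htr : ∀ p q, W (cpMul γ p q) = W (cpMul γ q p)) (a : A) :
    W (γ a, 0) = W (a, 0) := by
  simpa [cpMul] using htr (0, 1) (0, a)

-- The Schwarz inequality for `(a, 0)` and `(0, b)`, since `(a, 0)* (0, b) = (0, a* b)`.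
lemma cpIsState.dominated_inr (hW : cpIsState γ W)
    (htr : ∀ p q, W (cpMul γ p q) = W (cpMul γ q p)) :
    Dominated (fun a ↦ W (a, 0)) fun a ↦ W (0, a) := fun a b ↦ by
  have schwarz := norm_sq_apply_le_of_forall_apply_self_nonneg (s := cpForm γ hW.1) hW.2.1
    (a, 0) (0, b)
  simpa [cpForm, cpMul, cpStar, ← map_mul, apply_map_inl htr] using schwarz

end CrossedProduct

namespace CARrep

variable {H : Type*} [NormedAddCommGroup H] [InnerProductSpace ℂ H] (r : CARrep H A)

/-- The annihilation operators `φ ↦ a(φ)`, bundled as an antilinear map. -/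
def annihilation : H →ₗ⋆[ℂ] A where
  toFun := r.c
  map_add' := r.c_add
  map_smul' := r.c_smul

lemma c_neg (φ : H) : r.c (-φ) = -r.c φ := map_neg r.annihilation φ

lemma inner_map_map [Nontrivial A] {G : H → H} {γ : A ≃⋆ₐ[ℂ] A}
    (hγ : ∀ φ, γ (r.c φ) = r.c (G φ)) (φ ψ : H) : ⟪G φ, G ψ⟫_ℂ = ⟪φ, ψ⟫_ℂ := by
  have h : ⟪G φ, G ψ⟫_ℂ • (1 : A) = ⟪φ, ψ⟫_ℂ • (1 : A) := by
    rw [← r.car₁, ← map_one γ, ← map_smul, ← r.car₁]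
    simp only [map_add, map_mul, map_star, hγ]
  exact smul_left_injective ℂ one_ne_zero h

section Field

lemma star_Φ (ξ : H) : star (r.Φ ξ) = r.Φ ξ := by simp [Φ, add_comm]

lemma c_mul_c (φ ψ : H) : r.c φ * r.c ψ = -(r.c ψ * r.c φ) :=
  eq_neg_of_add_eq_zero_left (r.car₂ φ ψ)

lemma c_mul_self (φ : H) : r.c φ * r.c φ = 0 := by
  have h : (2 : ℂ) • (r.c φ * r.c φ) = 0 := by rw [two_smul, r.car₂]
  exact (smul_eq_zero.mp h).resolve_left two_ne_zero

lemma Φ_mul_self (ξ : H) : r.Φ ξ * r.Φ ξ = ⟪ξ, ξ⟫_ℂ • (1 : A) := by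
  have hstar : star (r.c ξ) * star (r.c ξ) = 0 := by rw [← star_mul, r.c_mul_self, star_zero]
  rw [Φ, add_mul, mul_add, mul_add, r.c_mul_self, hstar, zero_add, add_zero, r.car₁]

lemma Φ_mul_c {φ ξ : H} (h : ⟪φ, ξ⟫_ℂ = 0) : r.Φ ξ * r.c φ = -(r.c φ * r.Φ ξ) := by
  have hstar : star (r.c ξ) * r.c φ = -(r.c φ * star (r.c ξ)) :=
    eq_neg_of_add_eq_zero_left (by rw [r.car₁, h, zero_smul])
  rw [Φ, add_mul, mul_add, hstar, r.c_mul_c, neg_add]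

lemma Φ_mul_star_c {φ ξ : H} (h : ⟪φ, ξ⟫_ℂ = 0) :
    r.Φ ξ * star (r.c φ) = -(star (r.c φ) * r.Φ ξ) := by
  rw [eq_comm, neg_eq_iff_eq_neg]
  simpa [star_Φ] using congrArg star (r.Φ_mul_c h)

end Field

section NumberOperator

variable {ι : Type*} [Fintype ι]

/-- The number operator `∑ i, a*(v i) a(v i)` of a finite family of vectors. -/
def numberOp (v : ι → H) : A := ∑ i, star (r.c (v i)) * r.c (v i)

lemma star_numberOp (v : ι → H) : star (r.numberOp v) = r.numberOp v := by
  simp [numberOp]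

lemma map_numberOp {G : H → H} {γ : A ≃⋆ₐ[ℂ] A} (hγ : ∀ φ, γ (r.c φ) = r.c (G φ))
    {v : ι → H} {z : ι → ℂ} (hz : ∀ i, ‖z i‖ = 1) (hv : ∀ i, G (v i) = z i • v i) :
    γ (r.numberOp v) = r.numberOp v := by
  have hz' (i : ι) : starRingEnd ℂ (z i) * z i = 1 := by
    rw [Complex.conj_mul', hz]; simp
  simp [numberOp, map_star, hγ, hv, r.c_smul, smul_smul, hz']

lemma lie_star_c_mul_c_c (e φ : H) :
    ⁅star (r.c e) * r.c e, r.c φ⁆ = -(⟪φ, e⟫_ℂ • r.c e) := by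
  calc ⁅star (r.c e) * r.c e, r.c φ⁆
      = star (r.c e) * (r.c e * r.c φ) - r.c φ * star (r.c e) * r.c e := by
        rw [Ring.lie_def, mul_assoc, mul_assoc]
    _ = -((star (r.c e) * r.c φ + r.c φ * star (r.c e)) * r.c e) := by
        rw [r.c_mul_c e φ]; noncomm_ring
    _ = -(⟪φ, e⟫_ℂ • r.c e) := by rw [r.car₁, smul_one_mul]

lemma lie_numberOp_c {K : Submodule ℂ H} (b : OrthonormalBasis ι ℂ K) {φ : H} (hφ : φ ∈ K) :
    ⁅r.numberOp fun i ↦ (b i : H), r.c φ⁆ = -r.c φ := by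
  have expand : ∑ i, ⟪(b i : H), φ⟫_ℂ • (b i : H) = φ := by
    simpa using congrArg Subtype.val (b.sum_repr' ⟨φ, hφ⟩)
  have expand_c : ∑ i, ⟪φ, (b i : H)⟫_ℂ • r.c (b i) = r.c φ := by
    simpa [annihilation] using congrArg r.annihilation expand
  calc ⁅r.numberOp fun i ↦ (b i : H), r.c φ⁆
      = ∑ i, ⁅star (r.c (b i)) * r.c (b i), r.c φ⁆ := by
        simp only [numberOp, Ring.lie_def, Finset.sum_mul, Finset.mul_sum, Finset.sum_sub_distrib]
    _ = -r.c φ := by simp only [lie_star_c_mul_c_c, Finset.sum_neg_distrib, expand_c]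

lemma lie_numberOp_star_c {K : Submodule ℂ H} (b : OrthonormalBasis ι ℂ K) {φ : H}
    (hφ : φ ∈ K) : ⁅r.numberOp fun i ↦ (b i : H), star (r.c φ)⁆ = star (r.c φ) := by
  have h := congrArg star (r.lie_numberOp_c b hφ)
  rw [Ring.lie_def, star_sub, star_mul, star_mul, star_numberOp, star_neg] at h
  rw [Ring.lie_def, ← neg_sub, h, neg_neg]

end NumberOperator

section Monomial

/-- `r.IsMonomial K q x` says that `x` is a product of creation and annihilation operators of
vectors of `K`, where the charge `q` is the number of creators minus the number of
annihilators. -/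
inductive IsMonomial (K : Submodule ℂ H) : ℤ → A → Prop
  | one : IsMonomial K 0 1
  | c_mul {φ : H} {q : ℤ} {x : A} (hφ : φ ∈ K) (hx : IsMonomial K q x) :
      IsMonomial K (q - 1) (r.c φ * x)
  | star_c_mul {φ : H} {q : ℤ} {x : A} (hφ : φ ∈ K) (hx : IsMonomial K q x) :
      IsMonomial K (q + 1) (star (r.c φ) * x)

variable {r} {K L : Submodule ℂ H} {q : ℤ} {x : A}

lemma IsMonomial.mono (hx : r.IsMonomial K q x) (hKL : K ≤ L) : r.IsMonomial L q x := by
  induction hx with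
  | one => exact .one
  | c_mul hφ _ ih => exact .c_mul (hKL hφ) ih
  | star_c_mul hφ _ ih => exact .star_c_mul (hKL hφ) ih

lemma IsMonomial.lie_numberOp {ι : Type*} [Fintype ι] (hx : r.IsMonomial K q x)
    (b : OrthonormalBasis ι ℂ K) : ⁅r.numberOp fun i ↦ (b i : H), x⁆ = q • x := by
  have leibniz (n y z : A) : ⁅n, y * z⁆ = ⁅n, y⁆ * z + y * ⁅n, z⁆ := by
    simp only [Ring.lie_def]; noncomm_ring
  induction hx with
  | one => simp [Ring.lie_def]
  | c_mul hφ _ ih => rw [leibniz, ih, r.lie_numberOp_c b hφ, mul_smul_comm, neg_mul]; module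
  | star_c_mul hφ _ ih => rw [leibniz, ih, r.lie_numberOp_star_c b hφ, mul_smul_comm]; module

lemma IsMonomial.Φ_mul (hx : r.IsMonomial K q x) {ξ : H} (hξ : ξ ∈ Kᗮ) :
    r.Φ ξ * x = (-1 : ℂ) ^ q • (x * r.Φ ξ) := by
  have hneg : (-1 : ℂ) ≠ 0 := by norm_num
  induction hx with
  | one => simp
  | c_mul hφ _ ih =>
    rw [← mul_assoc, r.Φ_mul_c (hξ _ hφ), neg_mul, mul_assoc, ih, zpow_sub_one₀ hneg,
      mul_smul_comm, mul_assoc]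
    simp
  | star_c_mul hφ _ ih =>
    rw [← mul_assoc, r.Φ_mul_star_c (hξ _ hφ), neg_mul, mul_assoc, ih, zpow_add_one₀ hneg,
      mul_smul_comm, mul_assoc]
    simp

variable (r)

lemma exists_isMonomial_of_mem_closure
    (hx : x ∈ Submonoid.closure (Set.range r.c ∪ Set.range fun φ ↦ star (r.c φ))) :
    ∃ (K : Submodule ℂ H) (q : ℤ), FiniteDimensional ℂ K ∧ r.IsMonomial K q x := by
  induction hx using Submonoid.closure_induction_left with
  | one => exact ⟨⊥, 0, inferInstance, .one⟩
  | mul_left a ha y _ ih =>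
    obtain ⟨K, q, hK, hy⟩ := ih
    have mem_sup (φ : H) : φ ∈ K ⊔ ℂ ∙ φ :=
      Submodule.mem_sup_right (Submodule.mem_span_singleton_self φ)
    rcases ha with ⟨φ, rfl⟩ | ⟨φ, rfl⟩
    · exact ⟨K ⊔ ℂ ∙ φ, _, inferInstance, .c_mul (mem_sup φ) (hy.mono le_sup_left)⟩
    · exact ⟨K ⊔ ℂ ∙ φ, _, inferInstance, .star_c_mul (mem_sup φ) (hy.mono le_sup_left)⟩

lemma continuousLinearMap_eq_zero_of_isMonomial {E : Type*} [AddCommGroup E] [Module ℂ E]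
    [TopologicalSpace E] [T2Space E] {τ : A →L[ℂ] E}
    (hτ : ∀ (K : Submodule ℂ H) (q : ℤ) (x : A), FiniteDimensional ℂ K → r.IsMonomial K q x →
      τ x = 0) : τ = 0 := by
  refine ContinuousLinearMap.ext_on (s := Submonoid.closure
    (Set.range r.c ∪ Set.range fun φ ↦ star (r.c φ))) ?_ fun x hx ↦ ?_
  · rw [← Algebra.adjoin_eq_span]
    exact r.gen
  · obtain ⟨K, q, hK, hx⟩ := r.exists_isMonomial_of_mem_closure hx
    exact hτ K q x hK hx

end Monomial

section Bogoliubov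

variable {E : Type*} [AddCommGroup E] [Module ℂ E]
  {r} {G : H →ₗ[ℂ] H} {γ : A ≃⋆ₐ[ℂ] A} {K : Submodule ℂ H} {q : ℤ} {x : A}

-- `G` preserves inner products because `γ` preserves the anticommutators, and is an involution,
-- hence it is symmetric and can be diagonalized on `K` with eigenvalues of modulus one.
lemma exists_orthonormalBasis_map_numberOp_eq [Nontrivial A] (hγ : ∀ φ, γ (r.c φ) = r.c (G φ))
    (hG : ∀ φ, G (G φ) = φ) [FiniteDimensional ℂ K] (hGK : ∀ φ ∈ K, G φ ∈ K) :
    ∃ b : OrthonormalBasis (Fin (Module.finrank ℂ K)) ℂ K,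
      γ (r.numberOp fun i ↦ (b i : H)) = r.numberOp fun i ↦ (b i : H) := by
  have hG_symm : G.IsSymmetric := fun φ ψ ↦ by rw [← r.inner_map_map hγ, hG]
  have hGK_symm := hG_symm.restrict_invariant hGK
  let b := hGK_symm.eigenvectorBasis rfl
  have hb (i) : G (b i) = (hGK_symm.eigenvalues rfl i : ℂ) • (b i : H) :=
    congrArg Subtype.val (hGK_symm.apply_eigenvectorBasis rfl i)
  have norm_map (φ : H) : ‖G φ‖ = ‖φ‖ := by
    rw [@norm_eq_sqrt_re_inner ℂ, r.inner_map_map hγ, ← norm_eq_sqrt_re_inner]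
  refine ⟨b, r.map_numberOp hγ (fun i ↦ ?_) hb⟩
  have hb_norm : ‖(b i : H)‖ = 1 := b.norm_eq_one i
  simpa [hb, norm_smul, hb_norm] using norm_map (b i)

lemma IsMonomial.twistedTrace_eq_zero_of_charge_ne_zero [Nontrivial A]
    (hx : r.IsMonomial K q x) [FiniteDimensional ℂ K] (hq : q ≠ 0)
    (hγ : ∀ φ, γ (r.c φ) = r.c (G φ)) (hG : ∀ φ, G (G φ) = φ)
    {τ : A →ₗ[ℂ] E} (hτ : IsTwistedTrace γ τ) : τ x = 0 := by
  have : IsAddTorsionFree E := .of_isTorsionFree ℂ E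
  have hGL : ∀ φ ∈ K ⊔ K.map G, G φ ∈ K ⊔ K.map G := by
    intro φ hφ
    obtain ⟨ψ, hψ, -, ⟨χ, hχ, rfl⟩, rfl⟩ := Submodule.mem_sup.mp hφ
    rw [map_add, hG]
    exact add_mem (Submodule.mem_sup_right ⟨ψ, hψ, rfl⟩) (Submodule.mem_sup_left hχ)
  obtain ⟨b, hb⟩ := exists_orthonormalBasis_map_numberOp_eq hγ hG hGL
  have h := hτ.apply_lie_eq_zero hb x
  rw [(hx.mono le_sup_left).lie_numberOp b, map_zsmul] at h
  exact (smul_eq_zero.mp h).resolve_left hq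

lemma IsMonomial.twistedTrace_eq_zero_of_charge_eq_zero (hx : r.IsMonomial K 0 x)
    [FiniteDimensional ℂ K] (hγ : ∀ φ, γ (r.c φ) = r.c (G φ))
    (hodd : ¬ FiniteDimensional ℂ (LinearMap.ker (G + 1)))
    {τ : A →ₗ[ℂ] E} (hτ : IsTwistedTrace γ τ) : τ x = 0 := by
  have : IsAddTorsionFree E := .of_isTorsionFree ℂ E
  obtain ⟨ξ, hξG, hξK, hξ⟩ := exists_norm_eq_one_mem_orthogonal hodd K
  have hGξ : G ξ = -ξ := eq_neg_of_add_eq_zero_left hξG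
  refine hτ.apply_eq_zero_of_commute (u := r.Φ ξ) ?_ ?_ ?_
  · rw [r.Φ_mul_self, inner_self_eq_norm_sq_to_K, hξ]; simp
  · simp [Φ, map_star, hγ, hGξ, r.c_neg, add_comm]
  · rw [Commute, SemiconjBy, hx.Φ_mul hξK, zpow_zero, one_smul]

variable (r)

theorem twistedTrace_eq_zero [TopologicalSpace E] [T2Space E] (hγ : ∀ φ, γ (r.c φ) = r.c (G φ))
    (hG : ∀ φ, G (G φ) = φ) (hodd : ¬ FiniteDimensional ℂ (LinearMap.ker (G + 1)))
    {τ : A →L[ℂ] E} (hτ : IsTwistedTrace γ τ) : τ = 0 := by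
  nontriviality A
  refine r.continuousLinearMap_eq_zero_of_isMonomial fun K q x _ hx ↦ ?_
  obtain rfl | hq := eq_or_ne q 0
  · exact hx.twistedTrace_eq_zero_of_charge_eq_zero hγ hodd (τ := τ.toLinearMap) hτ
  · exact hx.twistedTrace_eq_zero_of_charge_ne_zero hq hγ hG (τ := τ.toLinearMap) hτ

end Bogoliubov

end CARrep

theorem tracial_twisted_functional_vanishes_general
    {H A : Type*} [NormedAddCommGroup H] [InnerProductSpace ℂ H] [CStarAlgebra A]
    (r : CARrep H A) (G : H →ₗ[ℂ] H) (hG_un : ∀ φ, G (G φ) = φ)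
    (hodd : ¬ FiniteDimensional ℂ (LinearMap.ker (G + 1)))
    (γ : A ≃⋆ₐ[ℂ] A) (hγ : ∀ φ, γ (r.c φ) = r.c (G φ)) :
    (∀ τ : A →L[ℂ] ℂ, IsTwistedTrace γ τ → τ = 0) ∧
    ∀ W : A × A → ℂ, cpIsState γ W →
      (∀ p q : A × A, W (cpMul γ p q) = W (cpMul γ q p)) →
      W = fun p : A × A ↦ W (p.1, 0) := by
  refine ⟨fun τ hτ ↦ r.twistedTrace_eq_zero hγ hG_un hodd hτ, fun W hW htr ↦ ?_⟩
  have hlin : IsLinearMap ℂ fun a ↦ W (0, a) := ((hW.1.mk' W).comp (LinearMap.inr ℂ A A)).isLinear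
  let τ := (hW.dominated_inr htr).toContinuousLinearMap hW.isState_inl hlin
  have hτ : τ = 0 := r.twistedTrace_eq_zero hγ hG_un hodd (isTwistedTrace_inr htr)
  funext p
  calc W p = W (p.1, 0) + W (0, p.2) := by rw [← hW.1.map_add]; simp
    _ = W (p.1, 0) := by rw [show W (0, p.2) = 0 from DFunLike.congr_fun hτ p.2, add_zero]

/-- Let `G` be a selfadjoint unitary on `H` with infinite-dimensional
`−1`-eigenspace `H_odd`, `γ_G` the induced Bogoliubov automorphism of `CAR(H)`, and `μ₀`
the unique tracial state on `CAR(H)`. Then the only `γ_G`-twisted tracial functional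
dominated by `μ₀` is `0`; consequently `μ₀` has a unique tracial extension to the
crossed product `CAR(H) ⋊_{γ_G} ℤ₂`, namely `μ₀ ∘ E`. -/
theorem tracial_twisted_functional_vanishes
    {H A : Type*} [NormedAddCommGroup H] [InnerProductSpace ℂ H] [CompleteSpace H]
    [CStarAlgebra A] (r : CARrep H A)
    (G : H →L[ℂ] H) (hG_sa : star G = G) (hG_un : ∀ φ, G (G φ) = φ)
    (hodd : ¬ FiniteDimensional ℂ (LinearMap.ker ((G + 1 : H →L[ℂ] H) : H →ₗ[ℂ] H)))
    (γ : A ≃⋆ₐ[ℂ] A) (hγ : ∀ φ, γ (r.c φ) = r.c (G φ))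
    (μ₀ : A → ℂ) (hμ₀_state : IsState μ₀)
    (hμ₀_tr : ∀ x y : A, μ₀ (x * y) = μ₀ (y * x))
    (hμ₀_unique : ∀ μ : A → ℂ, IsState μ → (∀ x y : A, μ (x * y) = μ (y * x)) → μ = μ₀) :
    (∀ τ : A → ℂ, IsLinearMap ℂ τ → (∀ x y : A, τ (x * y) = τ (y * γ x)) →
      Dominated μ₀ τ → τ = 0) ∧
    ∀ W : A × A → ℂ, cpIsState γ W →
      (∀ p q : A × A, W (cpMul γ p q) = W (cpMul γ q p)) →
      (∀ a : A, W (a, 0) = μ₀ a) →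
      W = fun p : A × A => μ₀ p.1 := by
  have general := tracial_twisted_functional_vanishes_general r (G : H →ₗ[ℂ] H) hG_un hodd γ hγ
  refine ⟨fun τ hlin htw hdom ↦ ?_, fun W hW htr hres ↦ ?_⟩
  · exact congrArg DFunLike.coe
      (general.1 (hdom.toContinuousLinearMap hμ₀_state hlin) htw)
  · simpa only [hres] using general.2 W hW htr

end
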